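/- Let n ≥ 3 be odd. Suppose there exists a balanced cyclic Gray code for S_n under all transpositions from 12⋯(n−1)n to 12⋯n(n−1) whose closing transposition is (n−1, n). Then there exists an almost balanced Gray code L for S_{n+1} from the word 12⋯(n+1) to the word 23⋯(n+1)1, i.e., a Gray code for S_{n+1} in which every wide transposition on [n+1] is applied exactly 2(n−1)! times. -/

import Mathlib

/-- A balanced cyclic Gray code for `S_n` under all transpositions: a cyclic listing
`π : Fin (N+1) → Perm (Fin n)` of all `n!` permutations of `[n]`, each appearing exactly
once, in which any two cyclically consecutive permutations differ by applying a
transposition, and each of the `n(n−1)/2` transpositions is applied exactly `2·(n−2)!`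
times along the cycle. -/
def IsBalancedCyclicGrayCode (n N : ℕ) (π : Fin (N + 1) → Equiv.Perm (Fin n)) : Prop :=
  N + 1 = Nat.factorial n ∧
  Function.Bijective π ∧
  (∀ s : Fin (N + 1), ∃ i j : Fin n, i ≠ j ∧ π (s + 1) = Equiv.swap i j * π s) ∧
  (∀ i j : Fin n, i ≠ j →
    (Finset.univ.filter (fun s : Fin (N + 1) =>
      π (s + 1) = Equiv.swap i j * π s)).card = 2 * Nat.factorial (n - 2))

/-!
Let `p` be the given code for `S_n`, multiplied on the right so as to start at `1`. The code for
`S_{n + 1}` consists of `n + 1` blocks, holding the values `n, n - 1, …, 0` in the last position;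
each block is a copy of `p` acting on the other values, and consecutive blocks are joined by the
adjacent transposition exchanging their held values. A wide transposition therefore occurs only in
the `n - 1` blocks that hold neither of its values, `2 (n - 2)!` times in each, provided that the
closing transposition of `p`, the only one that `p` lacks to be balanced, always corresponds to an
adjacent transposition.

Running through a block amounts to applying the image of the closing transposition. Choosing the
same image in blocks `2k` and `2k + 1` makes these two contributions cancel, so that only the
adjacent transpositions joining the blocks accumulate; their product is the rotation.
-/

open Equiv

section Sequences

variable {X G : Type*}

/-- The transition of a sequence `f` in a group at time `s`: the element by which `f s` is
multiplied on the left to give `f (s + 1)`. In a Gray code this is the applied transposition. -/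
def transition [Group G] (f : ℕ → G) (s : ℕ) : G :=
  f (s + 1) / f s

/-- The concatenation of the blocks `R b 0, …, R b (L - 1)` for `b = 0, 1, 2, …`, where `0 < L`. -/
def concatBlocks (L : ℕ) (R : ℕ → ℕ → X) (s : ℕ) : X :=
  R (s / L) (s % L)

/-- The periodic sequence running through a cyclic list. -/
def unroll {N : ℕ} (π : Fin (N + 1) → X) (s : ℕ) : X :=
  π (Fin.ofNat (N + 1) s)

theorem unroll_val {N : ℕ} (π : Fin (N + 1) → X) (s : Fin (N + 1)) : unroll π s = π s := by
  rw [unroll, Fin.ofNat_val_eq_self]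

theorem unroll_last {N : ℕ} (π : Fin (N + 1) → X) : unroll π N = π (Fin.last N) :=
  unroll_val π (Fin.last N)

theorem unroll_val_add_one {N : ℕ} (π : Fin (N + 1) → X) (s : Fin (N + 1)) :
    unroll π (s + 1) = π (s + 1) := by
  rw [unroll]
  congr 1
  ext
  simp [Fin.val_add]

theorem concatBlocks_apply {L r : ℕ} (R : ℕ → ℕ → X) (b : ℕ) (hr : r < L) :
    concatBlocks L R (b * L + r) = R b r := by
  have hL : 0 < L := by omega
  rw [concatBlocks, mul_comm, Nat.mul_add_div hL, Nat.div_eq_of_lt hr, add_zero, Nat.mul_add_mod,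
    Nat.mod_eq_of_lt hr]

theorem injOn_concatBlocks {L m : ℕ} {R : ℕ → ℕ → X}
    (hR : ∀ b < m, ∀ r < L, ∀ b' < m, ∀ r' < L, R b r = R b' r' → b = b' ∧ r = r') :
    Set.InjOn (concatBlocks L R) (Set.Iio (m * L)) := by
  intro s hs s' hs' h
  rw [Set.mem_Iio] at hs hs'
  have hL : 0 < L := Nat.pos_of_mul_pos_left (by omega : 0 < m * L)
  obtain ⟨hdiv, hmod⟩ := hR _ (Nat.div_lt_of_lt_mul (by rwa [mul_comm])) _ (Nat.mod_lt s hL)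
    _ (Nat.div_lt_of_lt_mul (by rwa [mul_comm])) _ (Nat.mod_lt s' hL) h
  rw [← Nat.div_add_mod s L, hdiv, hmod, Nat.div_add_mod]

variable [Group G] {N : ℕ}

theorem transition_concatBlocks_of_lt (R : ℕ → ℕ → G) (b : ℕ) {r : ℕ} (hr : r < N) :
    transition (concatBlocks (N + 1) R) (b * (N + 1) + r) = transition (R b) r := by
  rw [transition, add_assoc, concatBlocks_apply R b (by omega), concatBlocks_apply R b (by omega),
    transition]

theorem transition_concatBlocks_last (R : ℕ → ℕ → G) (b : ℕ) :
    transition (concatBlocks (N + 1) R) (b * (N + 1) + N) = R (b + 1) 0 / R b N := by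
  rw [transition, concatBlocks_apply R b N.lt_succ_self,
    show b * (N + 1) + N + 1 = (b + 1) * (N + 1) + 0 by ring,
    concatBlocks_apply R (b + 1) N.succ_pos]

theorem forall_transition_concatBlocks {P : G → Prop} {R : ℕ → ℕ → G} {m : ℕ}
    (hblock : ∀ b, ∀ r < N, P (transition (R b) r))
    (hjoin : ∀ b < m, P (R (b + 1) 0 / R b N)) :
    ∀ s < m * (N + 1) + N, P (transition (concatBlocks (N + 1) R) s) := by
  intro s hs
  obtain ⟨b, r, hr, rfl⟩ : ∃ b r, r ≤ N ∧ s = b * (N + 1) + r :=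
    ⟨s / (N + 1), s % (N + 1), Nat.le_of_lt_succ (Nat.mod_lt s N.succ_pos),
      (Nat.div_add_mod' s (N + 1)).symm⟩
  rcases hr.lt_or_eq with hr | rfl
  · rw [transition_concatBlocks_of_lt R b hr]
    exact hblock b r hr
  · rw [transition_concatBlocks_last]
    exact hjoin b (Nat.lt_of_mul_lt_mul_right (Nat.lt_of_add_lt_add_right hs))

theorem count_transition_concatBlocks (P : G → Prop) [DecidablePred P] (R : ℕ → ℕ → G) (m : ℕ) :
    Nat.count (fun s => P (transition (concatBlocks (N + 1) R) s)) (m * (N + 1) + N) =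
      ∑ b ∈ Finset.range (m + 1), Nat.count (fun r => P (transition (R b) r)) N +
        Nat.count (fun b => P (R (b + 1) 0 / R b N)) m := by
  have hblock (b : ℕ) :
      Nat.count (fun r => P (transition (concatBlocks (N + 1) R) (b * (N + 1) + r))) N =
        Nat.count (fun r => P (transition (R b) r)) N := by
    simp only [Nat.count_eq_card_filter_range]
    congr 1
    refine Finset.filter_congr fun r hr => ?_
    rw [transition_concatBlocks_of_lt R b (Finset.mem_range.1 hr)]
  induction m with
  | zero => simpa using hblock 0
  | succ m ih =>
    rw [show (m + 1) * (N + 1) + N = m * (N + 1) + N + 1 + N by ring, Nat.count_add,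
      Nat.count_succ, ih, transition_concatBlocks_last, Finset.sum_range_succ _ (m + 1),
      ← hblock (m + 1), Nat.count_succ _ m]
    simp only [show m * (N + 1) + N + 1 = (m + 1) * (N + 1) by ring]
    ring

theorem card_filter_fin_eq_count (P : ℕ → Prop) [DecidablePred P] (m : ℕ) :
    (Finset.univ.filter fun s : Fin m => P s).card = Nat.count P m := by
  rw [Nat.count_eq_card_filter_range, Finset.card_filter, Finset.card_filter,
    Fin.sum_univ_eq_sum_range fun s => if P s then 1 else 0]

theorem card_filter_eq_count_transition [DecidableEq G] (f : ℕ → G) (M : ℕ) (g : G) :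
    (Finset.univ.filter fun s : Fin (M + 1) =>
      (s : ℕ) < M ∧ f ((s + 1 : Fin (M + 1)) : ℕ) = g * f s).card =
      Nat.count (fun s => transition f s = g) M := by
  have hiff (s : Fin (M + 1)) : (s : ℕ) < M ∧ f ((s + 1 : Fin (M + 1)) : ℕ) = g * f s ↔
      (s : ℕ) < M ∧ transition f s = g := by
    refine and_congr_right fun hs => ?_
    rw [Fin.val_add_one_of_lt (Fin.lt_def.2 hs), transition,
      div_eq_iff_eq_mul]
  simp only [hiff]
  rw [card_filter_fin_eq_count fun s => s < M ∧ transition f s = g, Nat.count_succ,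
    if_neg fun h => h.1.false, add_zero, Nat.count_eq_card_filter_range,
    Nat.count_eq_card_filter_range]
  congr 1
  exact Finset.filter_congr fun s hs => and_iff_right (Finset.mem_range.1 hs)

end Sequences

section Permutations

variable {α β γ : Type*}

theorem exists_equiv_apply_eq_apply_eq (e : α ≃ γ) {x y : α} (hxy : x ≠ y) {a b : γ}
    (hab : a ≠ b) : ∃ f : α ≃ γ, f x = a ∧ f y = b := by
  obtain ⟨g, hx, hy⟩ := MulAction.is_two_pretransitive_iff.1
    (Perm.isMultiplyPretransitive γ 2) (e.injective.ne hxy) hab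
  exact ⟨e.trans g, hx, hy⟩

variable [DecidableEq β]

theorem extendDomain_apply_omitted (σ : Perm α) {k : β} (f : α ≃ {y // y ≠ k}) :
    σ.extendDomain f k = k :=
  σ.extendDomain_apply_not_subtype f (not_not.2 rfl)

variable [DecidableEq α]

theorem extendDomain_swap {P : β → Prop} [DecidablePred P] (f : α ≃ Subtype P) (x y : α) :
    (swap x y).extendDomain f = swap (f x : β) (f y) := by
  ext z
  by_cases hz : P z
  · obtain ⟨w, hw⟩ := f.surjective ⟨z, hz⟩
    obtain rfl : (f w : β) = z := by rw [hw]
    rw [Perm.extendDomain_apply_image]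
    exact (Subtype.val_injective.comp f.injective).map_swap x y w
  · rw [Perm.extendDomain_apply_not_subtype _ _ hz, swap_apply_of_ne_of_ne]
    · rintro rfl; exact hz (f x).2
    · rintro rfl; exact hz (f y).2

theorem swap_ne_swap_of_not_adjacent {n : ℕ} {a b i j : Fin n}
    (hab : (a : ℕ) + 1 = b ∨ (b : ℕ) + 1 = a) (hij : ¬((i : ℕ) + 1 = j ∨ (j : ℕ) + 1 = i)) :
    swap a b ≠ swap i j := by
  intro h
  have ha : swap i j a = b := by rw [← h, swap_apply_left]
  grind

theorem swap_eq_cycleIcc {n : ℕ} {i j : Fin (n + 1)} (hij : (i : ℕ) + 1 = j) :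
    swap i j = Fin.cycleIcc i j := by
  have hlt : i < j := Fin.lt_def.2 (by omega)
  ext k
  rcases lt_trichotomy k i with hk | rfl | hk
  · rw [Fin.cycleIcc_of_lt hk, swap_apply_of_ne_of_ne hk.ne (hk.trans hlt).ne]
  · rw [swap_apply_left, Fin.cycleIcc_of_ge_of_lt le_rfl hlt,
      Fin.val_add_one_of_lt (hlt.trans_le (Fin.le_last j)), hij]
  · rcases (show j ≤ k from Fin.le_def.2 (by omega)).eq_or_lt with rfl | hjk
    · rw [swap_apply_right, Fin.cycleIcc_of_last hlt.le]
    · rw [Fin.cycleIcc_of_gt hjk, swap_apply_of_ne_of_ne hk.ne' hjk.ne']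

theorem swap_mul_cycleIcc {n : ℕ} {i j k : Fin (n + 1)} (hij : (i : ℕ) + 1 = j) (hjk : j ≤ k) :
    swap i j * Fin.cycleIcc j k = Fin.cycleIcc i k := by
  rw [swap_eq_cycleIcc hij]
  exact DFunLike.coe_injective (Fin.cycleIcc.trans (Fin.le_def.2 (by omega)) hjk)

end Permutations

/-- The terms `f 0, …, f M` form a Gray code for the symmetric group on `α` under all
transpositions; later values of `f` are irrelevant. -/
structure IsGrayCode {α : Type*} [Fintype α] [DecidableEq α] (f : ℕ → Perm α) (M : ℕ) : Prop where
  length_eq : M + 1 = (Fintype.card α).factorial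
  injOn : Set.InjOn f (Set.Iio (M + 1))
  isSwap_transition : ∀ s < M, (transition f s).IsSwap

namespace IsGrayCode

variable {α : Type*} [Fintype α] [DecidableEq α] {f : ℕ → Perm α} {M : ℕ}

theorem bijective (hf : IsGrayCode f M) :
    Function.Bijective fun s : Fin (M + 1) => f s := by
  rw [Fintype.bijective_iff_injective_and_card]
  exact ⟨fun s s' h => Fin.ext (hf.injOn s.2 s'.2 h),
    by rw [Fintype.card_fin, Fintype.card_perm, hf.length_eq]⟩

theorem exists_eq_swap_mul (hf : IsGrayCode f M) (s : Fin (M + 1)) (hs : (s : ℕ) < M) :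
    ∃ i j : α, i ≠ j ∧ f ((s + 1 : Fin (M + 1)) : ℕ) = swap i j * f s := by
  obtain ⟨i, j, hij, h⟩ := hf.isSwap_transition s hs
  refine ⟨i, j, hij, ?_⟩
  rw [Fin.val_add_one_of_lt (Fin.lt_def.2 hs)]
  exact div_eq_iff_eq_mul.1 h

end IsGrayCode

namespace IsBalancedCyclicGrayCode

variable {n N : ℕ} {π : Fin (N + 1) → Perm (Fin n)}

theorem mul_right (hπ : IsBalancedCyclicGrayCode n N π) (σ : Perm (Fin n)) :
    IsBalancedCyclicGrayCode n N fun s => π s * σ := by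
  simpa only [IsBalancedCyclicGrayCode, ← mul_assoc, mul_left_inj] using
    ⟨hπ.1, (Group.mulRight_bijective σ).comp hπ.2.1, hπ.2.2⟩

theorem isGrayCode_unroll (hπ : IsBalancedCyclicGrayCode n N π) : IsGrayCode (unroll π) N where
  length_eq := by rw [Fintype.card_fin, hπ.1]
  injOn r hr r' hr' h := by
    lift r to Fin (N + 1) using hr
    lift r' to Fin (N + 1) using hr'
    rw [unroll_val, unroll_val] at h
    rw [hπ.2.1.injective h]
  isSwap_transition s hs := by
    obtain ⟨i, j, hij, h⟩ := hπ.2.2.1 ⟨s, by omega⟩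
    rw [← unroll_val_add_one π, ← unroll_val π] at h
    exact ⟨i, j, hij, div_eq_iff_eq_mul.2 h⟩

theorem count_transition_unroll (hπ : IsBalancedCyclicGrayCode n N π) {i j : Fin n} (hij : i ≠ j) :
    Nat.count (fun r => transition (unroll π) r = swap i j) (N + 1) =
      2 * (n - 2).factorial := by
  rw [← hπ.2.2.2 i j hij, ← card_filter_fin_eq_count]
  simp only [transition, div_eq_iff_eq_mul, unroll_val, unroll_val_add_one]

theorem count_transition_unroll_of_ne_closing (hπ : IsBalancedCyclicGrayCode n N π) {i j : Fin n}
    (hij : i ≠ j) (hclosing : π 0 / π (Fin.last N) ≠ swap i j) :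
    Nat.count (fun r => transition (unroll π) r = swap i j) N = 2 * (n - 2).factorial := by
  have hlast : transition (unroll π) N = π 0 / π (Fin.last N) := by
    have hnext := unroll_val_add_one π (Fin.last N)
    rw [Fin.val_last, Fin.last_add_one] at hnext
    rw [transition, hnext, unroll_last]
  rw [← hπ.count_transition_unroll hij, Nat.count_succ, hlast, if_neg hclosing, add_zero]

end IsBalancedCyclicGrayCode

section BlockCode

variable {α β : Type*} [DecidableEq β] {K : ℕ → β}
  (p : ℕ → Perm α) (N : ℕ) (f : ∀ b, α ≃ {y // y ≠ K b})

/-- The first permutation of the `b`-th block of `blockCode`. It is obtained from the last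
permutation of the preceding block by exchanging the values `K (b - 1)` and `K b`. -/
def blockStart : ℕ → Perm β
  | 0 => 1
  | b + 1 => swap (K b) (K (b + 1)) * ((p N).extendDomain (f b) * blockStart b)

/-- The `b`-th block of `blockCode`: the code `p` acting on the values other than `K b`, which are
labelled by `f b`. -/
def block (b r : ℕ) : Perm β :=
  (p r).extendDomain (f b) * blockStart p N f b

/-- The sequence of permutations of `β` obtained from a code `p 0, …, p N` of permutations of `α`
by running through it once for each `b`, with the value `K b` held in a fixed position. -/
def blockCode : ℕ → Perm β :=
  concatBlocks (N + 1) (block p N f)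

variable {p N f}

theorem blockStart_apply_zero (b : ℕ) : blockStart p N f b (K 0) = K b := by
  induction b with
  | zero => rfl
  | succ b ih =>
    rw [blockStart, Perm.mul_apply, Perm.mul_apply, ih,
      extendDomain_apply_omitted, swap_apply_left]

theorem block_apply_zero (b r : ℕ) : block p N f b r (K 0) = K b := by
  rw [block, Perm.mul_apply, blockStart_apply_zero,
    extendDomain_apply_omitted]

theorem block_zero (hp0 : p 0 = 1) (b : ℕ) : block p N f b 0 = blockStart p N f b := by
  rw [block, hp0, Perm.extendDomain_one, one_mul]

theorem blockCode_zero (hp0 : p 0 = 1) : blockCode p N f 0 = 1 := by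
  rw [blockCode, concatBlocks, Nat.zero_div, Nat.zero_mod, block_zero hp0, blockStart]

theorem block_succ_zero_div (hp0 : p 0 = 1) (b : ℕ) :
    block p N f (b + 1) 0 / block p N f b N = swap (K b) (K (b + 1)) := by
  rw [block_zero hp0, div_eq_iff_eq_mul, blockStart, block]

theorem transition_block (b r : ℕ) :
    transition (block p N f b) r = (transition p r).extendDomain (f b) := by
  rw [transition, block, block, mul_div_mul_right_eq_div]
  exact (map_div (Perm.extendDomainHom (f b)) _ _).symm

theorem block_injOn (hp : Set.InjOn p (Set.Iio (N + 1))) {m : ℕ} (hK : Set.InjOn K (Set.Iio m)) :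
    ∀ b < m, ∀ r < N + 1, ∀ b' < m, ∀ r' < N + 1,
      block p N f b r = block p N f b' r' → b = b' ∧ r = r' := by
  intro b hb r hr b' hb' r' hr' h
  obtain rfl : b = b' := hK hb hb' (by
    rw [← block_apply_zero (p := p) (N := N) (f := f) b r, h, block_apply_zero])
  exact ⟨rfl, hp hr hr' (Perm.extendDomainHom_injective (f b) (mul_right_cancel h))⟩

theorem isGrayCode_blockCode [Fintype α] [DecidableEq α] [Fintype β] (hp : IsGrayCode p N)
    (hp0 : p 0 = 1) (hK : Set.InjOn K (Set.Iio (Fintype.card β))) :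
    IsGrayCode (blockCode p N f) (Fintype.card α * (N + 1) + N) := by
  have hcard : Fintype.card β = Fintype.card α + 1 := by
    rw [Fintype.card_congr (f 0)]
    simp [Nat.sub_add_cancel (Fintype.card_pos_iff.2 ⟨K 0⟩)]
  have hlength : Fintype.card α * (N + 1) + N + 1 = Fintype.card β * (N + 1) := by
    rw [hcard]
    ring
  refine ⟨?_, ?_, ?_⟩
  · rw [hlength, hp.length_eq, hcard, Nat.factorial_succ]
  · rw [hlength]
    exact injOn_concatBlocks (block_injOn hp.injOn hK)
  · refine forall_transition_concatBlocks (fun b r hr => ?_) fun b hb => ?_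
    · obtain ⟨x, y, hxy, h⟩ := hp.isSwap_transition r hr
      rw [transition_block, h, extendDomain_swap]
      exact ⟨_, _, Subtype.val_injective.ne ((f b).injective.ne hxy), rfl⟩
    · rw [block_succ_zero_div hp0]
      exact ⟨_, _, fun h => b.succ_ne_self (hK (by grind) (by grind) h.symm), rfl⟩

theorem block_succ_last_of_extendDomain_eq (hinv : p N * p N = 1) {b : ℕ}
    (hf : (p N).extendDomain (f (b + 1)) = (p N).extendDomain (f b)) :
    block p N f (b + 1) N = swap (K b) (K (b + 1)) * blockStart p N f b := by
  have hfix : (p N).extendDomain (f b) (K (b + 1)) = K (b + 1) := by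
    rw [← hf, extendDomain_apply_omitted]
  rw [block, hf, blockStart, ← mul_assoc, mul_swap_eq_swap_mul, extendDomain_apply_omitted, hfix,
    mul_assoc, ← mul_assoc (Perm.extendDomain _ _), Perm.extendDomain_mul, hinv,
    Perm.extendDomain_one, one_mul]

theorem blockStart_add_two_of_extendDomain_eq (hinv : p N * p N = 1) {b : ℕ}
    (hf : (p N).extendDomain (f (b + 1)) = (p N).extendDomain (f b)) :
    blockStart p N f (b + 2) =
      swap (K (b + 1)) (K (b + 2)) * (swap (K b) (K (b + 1)) * blockStart p N f b) := by
  rw [← block_succ_last_of_extendDomain_eq hinv hf, block, blockStart]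

variable [Fintype β]

theorem count_transition_block_eq_zero {b : ℕ} {i j : β} (hij : i ≠ j) (h : i = K b ∨ j = K b) :
    Nat.count (fun r => transition (block p N f b) r = swap i j) N = 0 := by
  have hmoves : swap i j (K b) ≠ K b := by
    rcases h with rfl | rfl
    · rwa [swap_apply_left, ne_comm]
    · rwa [swap_apply_right]
  rw [Nat.count_eq_card_filter_range, Finset.card_eq_zero, Finset.filter_eq_empty_iff]
  intro r _ hr
  rw [← hr, transition_block] at hmoves
  exact hmoves (extendDomain_apply_omitted _ _)

theorem count_transition_blockCode (hp0 : p 0 = 1) {m : ℕ} {i j : β}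
    (hjoin : ∀ b < m, swap (K b) (K (b + 1)) ≠ swap i j) :
    Nat.count (fun s => transition (blockCode p N f) s = swap i j) (m * (N + 1) + N) =
      ∑ b ∈ Finset.range (m + 1),
        Nat.count (fun r => transition (block p N f b) r = swap i j) N := by
  rw [blockCode, count_transition_concatBlocks (· = swap i j), Nat.add_eq_left,
    Nat.count_eq_card_filter_range, Finset.card_eq_zero, Finset.filter_eq_empty_iff]
  intro b hb
  rw [block_succ_zero_div hp0]
  exact hjoin b (Finset.mem_range.1 hb)

theorem count_transition_block [Fintype α] [DecidableEq α] (b : ℕ) (x y : α) :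
    Nat.count (fun r => transition (block p N f b) r = swap (f b x : β) (f b y)) N =
      Nat.count (fun r => transition p r = swap x y) N := by
  have hinj (σ τ : Perm α) : σ.extendDomain (f b) = τ.extendDomain (f b) ↔ σ = τ :=
    (Perm.extendDomainHom_injective (f b)).eq_iff
  simp only [transition_block, ← extendDomain_swap, hinj]

end BlockCode

section DescendingBlocks

/-- The value held in the last position throughout the `b`-th block, namely `n, n - 1, …, 0` for
`b = 0, 1, …, n` (and `0` afterwards, by truncated subtraction). -/
def heldValue (n b : ℕ) : Fin (n + 1) :=
  ⟨n - b, by omega⟩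

theorem val_heldValue (n b : ℕ) : (heldValue n b : ℕ) = n - b :=
  rfl

theorem heldValue_self (n : ℕ) : heldValue n n = 0 := by
  ext
  simp [val_heldValue]

theorem val_heldValue_succ_add_one {n b : ℕ} (hb : b < n) :
    (heldValue n (b + 1) : ℕ) + 1 = heldValue n b := by
  simp only [val_heldValue]
  omega

theorem injOn_heldValue (n : ℕ) : Set.InjOn (heldValue n) (Set.Iio (n + 1)) := by
  intro b hb b' hb' h
  rw [Set.mem_Iio] at hb hb'
  have := congrArg Fin.val h
  simp only [val_heldValue] at this
  omega

theorem card_filter_heldValue_ne {n : ℕ} {i j : Fin (n + 1)} (hij : i ≠ j) :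
    ((Finset.range (n + 1)).filter fun b => i ≠ heldValue n b ∧ j ≠ heldValue n b).card =
      n - 1 := by
  have hset : ((Finset.range (n + 1)).filter fun b => i ≠ heldValue n b ∧ j ≠ heldValue n b) =
      Finset.range (n + 1) \ {n - (i : ℕ), n - (j : ℕ)} := by
    ext b
    have := i.2
    have := j.2
    simp only [Finset.mem_filter, Finset.mem_sdiff, Finset.mem_insert, Finset.mem_singleton,
      Finset.mem_range, ne_eq, Fin.ext_iff, val_heldValue]
    omega
  have := Fin.val_injective.ne hij
  rw [hset, Finset.card_sdiff_of_subset (by grind), Finset.card_range, Finset.card_pair (by grind)]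
  omega

-- Since `n` is odd, the held values of blocks `2 * k` and `2 * k + 1` pair up as `{n, n - 1}`, …,
-- `{3, 2}`, `{1, 0}`, and each of these pairs avoids `{0, 1}` or `{2, 3}`.
theorem exists_adjacent_ne_heldValue {n : ℕ} (hn : 3 ≤ n) (hodd : Odd n) (k : ℕ) :
    ∃ a c : Fin (n + 1), (a : ℕ) + 1 = c ∧
      ∀ b, b / 2 = k → a ≠ heldValue n b ∧ c ≠ heldValue n b := by
  obtain ⟨m, rfl⟩ := hodd
  rcases lt_or_ge k m with hk | hk
  · refine ⟨⟨0, by omega⟩, ⟨1, by omega⟩, rfl, fun b hb => ?_⟩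
    simp only [ne_eq, Fin.ext_iff, val_heldValue]
    omega
  · refine ⟨⟨2, by omega⟩, ⟨3, by omega⟩, rfl, fun b hb => ?_⟩
    simp only [ne_eq, Fin.ext_iff, val_heldValue]
    omega

theorem exists_labelling_adjacent {n : ℕ} (hn : 3 ≤ n) (hodd : Odd n) {x y : Fin n} (hxy : x ≠ y) :
    ∃ f : ∀ b, Fin n ≃ {v // v ≠ heldValue n b},
      (∀ b, (f b x : ℕ) + 1 = (f b y : Fin (n + 1))) ∧
      ∀ k, (swap x y).extendDomain (f (2 * k + 1)) = (swap x y).extendDomain (f (2 * k)) := by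
  choose a c hac hne using exists_adjacent_ne_heldValue hn hodd
  choose f hfx hfy using fun b => exists_equiv_apply_eq_apply_eq (finSuccAboveEquiv (heldValue n b))
    hxy (a := ⟨a (b / 2), (hne _ b rfl).1⟩) (b := ⟨c (b / 2), (hne _ b rfl).2⟩) (by grind)
  refine ⟨f, fun b => by simpa only [hfx, hfy] using hac (b / 2), fun k => ?_⟩
  simp only [extendDomain_swap, hfx, hfy, show (2 * k + 1) / 2 = 2 * k / 2 by omega]

variable {n N : ℕ} {p : ℕ → Perm (Fin n)} {f : ∀ b, Fin n ≃ {v // v ≠ heldValue n b}}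

theorem blockStart_eq_cycleIcc (hinv : p N * p N = 1)
    (hf : ∀ k, (p N).extendDomain (f (2 * k + 1)) = (p N).extendDomain (f (2 * k))) {k : ℕ}
    (hk : 2 * k ≤ n) :
    blockStart p N f (2 * k) = Fin.cycleIcc (heldValue n (2 * k)) (Fin.last n) := by
  induction k with
  | zero => exact Fin.cycleIcc_eq.symm
  | succ k ih =>
    rw [mul_add_one, blockStart_add_two_of_extendDomain_eq hinv (hf k), ih (by omega),
      swap_comm, swap_comm (heldValue n (2 * k)),
      swap_mul_cycleIcc (val_heldValue_succ_add_one (by omega)) (Fin.le_last _),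
      swap_mul_cycleIcc (val_heldValue_succ_add_one (by omega)) (Fin.le_last _)]

theorem blockCode_last (hodd : Odd n) (hinv : p N * p N = 1)
    (hf : ∀ k, (p N).extendDomain (f (2 * k + 1)) = (p N).extendDomain (f (2 * k))) :
    blockCode p N f (n * (N + 1) + N) = finRotate (n + 1) := by
  obtain ⟨k, rfl⟩ := hodd
  rw [blockCode, concatBlocks_apply _ _ N.lt_succ_self,
    block_succ_last_of_extendDomain_eq hinv (hf k), blockStart_eq_cycleIcc hinv hf (by omega),
    swap_comm, swap_mul_cycleIcc (val_heldValue_succ_add_one (by omega)) (Fin.le_last _),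
    heldValue_self, Fin.cycleIcc_zero_eq_cycleRange, Fin.cycleRange_last]

theorem count_transition_blockCode_of_not_adjacent (hp0 : p 0 = 1) {x y : Fin n}
    (hadj : ∀ b, (f b x : ℕ) + 1 = (f b y : Fin (n + 1))) {c : ℕ}
    (hcount : ∀ u v, u ≠ v → swap x y ≠ swap u v →
      Nat.count (fun r => transition p r = swap u v) N = c)
    {i j : Fin (n + 1)} (hij : i ≠ j) (hwide : ¬((i : ℕ) + 1 = j ∨ (j : ℕ) + 1 = i)) :
    Nat.count (fun s => transition (blockCode p N f) s = swap i j) (n * (N + 1) + N) =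
      (n - 1) * c := by
  have hblock (b : ℕ) : Nat.count (fun r => transition (block p N f b) r = swap i j) N =
      if i ≠ heldValue n b ∧ j ≠ heldValue n b then c else 0 := by
    split_ifs with h
    · obtain ⟨u, hu⟩ := (f b).surjective ⟨i, h.1⟩
      obtain ⟨v, hv⟩ := (f b).surjective ⟨j, h.2⟩
      obtain rfl : (f b u : Fin (n + 1)) = i := by rw [hu]
      obtain rfl : (f b v : Fin (n + 1)) = j := by rw [hv]
      rw [count_transition_block, hcount u v (fun h => hij (by rw [h]))]
      intro hclosing
      apply swap_ne_swap_of_not_adjacent (Or.inl (hadj b)) hwide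
      rw [← extendDomain_swap, hclosing, extendDomain_swap]
    · exact count_transition_block_eq_zero hij (by tauto)
  rw [count_transition_blockCode hp0 fun b hb => swap_ne_swap_of_not_adjacent
    (Or.inr (val_heldValue_succ_add_one hb)) hwide, Finset.sum_congr rfl fun b _ => hblock b,
    ← Finset.sum_filter, Finset.sum_const, smul_eq_mul, card_filter_heldValue_ne hij]

end DescendingBlocks

theorem almost_balanced_gray_code_succ_general {n N : ℕ} (hn : 3 ≤ n) (hodd : Odd n)
    {π : Fin (N + 1) → Perm (Fin n)} (hπ : IsBalancedCyclicGrayCode n N π) :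
    ∃ (M : ℕ) (ρ : Fin (M + 1) → Perm (Fin (n + 1))),
      M + 1 = (n + 1).factorial ∧
      Function.Bijective ρ ∧
      ρ 0 = 1 ∧
      ρ (Fin.last M) = finRotate (n + 1) ∧
      (∀ s : Fin (M + 1), (s : ℕ) < M →
        ∃ i j : Fin (n + 1), i ≠ j ∧ ρ (s + 1) = swap i j * ρ s) ∧
      (∀ i j : Fin (n + 1), i ≠ j →
        ¬((i : ℕ) + 1 = (j : ℕ) ∨ (j : ℕ) + 1 = (i : ℕ)) →
        (Finset.univ.filter (fun s : Fin (M + 1) =>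
          (s : ℕ) < M ∧ ρ (s + 1) = swap i j * ρ s)).card
            = 2 * (n - 1).factorial) := by
  wlog hπ0 : π 0 = 1 generalizing π
  · exact this (hπ.mul_right (π 0)⁻¹) (mul_inv_cancel (π 0))
  obtain ⟨x, y, hxy, hclosing⟩ := hπ.2.2.1 (Fin.last N)
  rw [Fin.last_add_one] at hclosing
  have hp0 : unroll π 0 = 1 := hπ0
  have hpN : unroll π N = swap x y := by
    rw [unroll_last, ← swap_inv]
    exact eq_inv_of_mul_eq_one_right (hclosing.symm.trans hπ0)
  have hinv : unroll π N * unroll π N = 1 := by rw [hpN, swap_mul_self]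
  obtain ⟨f, hadj, hpair⟩ := exists_labelling_adjacent hn hodd hxy
  rw [← hpN] at hpair
  have hcode : IsGrayCode (blockCode (unroll π) N f) (n * (N + 1) + N) := by
    simpa only [Fintype.card_fin] using isGrayCode_blockCode hπ.isGrayCode_unroll hp0
      (by simpa only [Fintype.card_fin] using injOn_heldValue n)
  refine ⟨n * (N + 1) + N, fun s => blockCode (unroll π) N f s, ?_, hcode.bijective,
    blockCode_zero hp0, blockCode_last hodd hinv hpair, hcode.exists_eq_swap_mul, ?_⟩
  · rw [hcode.length_eq, Fintype.card_fin]
  · intro i j hij hwide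
    rw [card_filter_eq_count_transition, count_transition_blockCode_of_not_adjacent hp0 hadj
      (fun u v huv hne => hπ.count_transition_unroll_of_ne_closing huv
        (by rwa [div_eq_iff_eq_mul.2 hclosing])) hij hwide,
      mul_left_comm, show n - 2 = n - 1 - 1 from rfl, Nat.mul_factorial_pred (by omega)]

/-- Let `n ≥ 3` be odd. If `S_n` has a balanced cyclic Gray code under all
transpositions from `12⋯(n−1)n` to `12⋯n(n−1)` with closing transposition `(n−1, n)`,
then `S_{n+1}` has an almost balanced Gray code `L` from the word `12⋯(n+1)` (the
identity) to the word `23⋯(n+1)1` (the rotation `finRotate (n+1)`): a (non-cyclic)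
listing of all `(n+1)!` permutations, each exactly once, consecutive ones differing by
applying a transposition, in which every wide transposition (`|i−j| ≠ 1`) on `[n+1]` is
applied exactly `2·(n−1)!` times. -/
theorem almost_balanced_gray_code_succ (n : ℕ) (hn : 3 ≤ n) (hodd : Odd n)
    (h : ∃ (N : ℕ) (π : Fin (N + 1) → Equiv.Perm (Fin n)),
      IsBalancedCyclicGrayCode n N π ∧
      π 0 = 1 ∧
      π (Fin.last N) = Equiv.swap ⟨n - 2, by omega⟩ ⟨n - 1, by omega⟩ ∧
      π 0 = Equiv.swap ⟨n - 2, by omega⟩ ⟨n - 1, by omega⟩ * π (Fin.last N)) :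
    ∃ (M : ℕ) (ρ : Fin (M + 1) → Equiv.Perm (Fin (n + 1))),
      M + 1 = Nat.factorial (n + 1) ∧
      Function.Bijective ρ ∧
      ρ 0 = 1 ∧
      ρ (Fin.last M) = finRotate (n + 1) ∧
      (∀ s : Fin (M + 1), (s : ℕ) < M →
        ∃ i j : Fin (n + 1), i ≠ j ∧ ρ (s + 1) = Equiv.swap i j * ρ s) ∧
      (∀ i j : Fin (n + 1), i ≠ j →
        ¬((i : ℕ) + 1 = (j : ℕ) ∨ (j : ℕ) + 1 = (i : ℕ)) →
        (Finset.univ.filter (fun s : Fin (M + 1) =>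
          (s : ℕ) < M ∧ ρ (s + 1) = Equiv.swap i j * ρ s)).card
            = 2 * Nat.factorial (n - 1)) := by
  obtain ⟨N, π, hπ, -⟩ := h
  exact almost_balanced_gray_code_succ_general hn hodd hπ
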